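/- arXiv:2208.02099 — 7 statements merged into one kernel-verified Lean document; each statement's English description precedes it below -/
import Mathlib

section
/- Let u, v, w ∈ ℝ² be such that v − u and w − u are linearly independent over ℝ. Let ρ₁, ρ₂, ρ₃ be primitive vectors of ℤ² such that v − u = t₁·ρ₁, w − u = t₂·ρ₂ and w − v = t₃·ρ₃ for some real numbers t₁, t₂, t₃ > 0. Assume that (ρ₁, ρ₂) is a ℤ-basis of ℤ². Then both (ρ₁, ρ₃) and (ρ₂, ρ₃) are ℤ-bases of ℤ² if and only if ρ₃ = ρ₂ − ρ₁. -/
/-!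
Pairing the closing relation `t₃ρ₃ = t₂ρ₂ - t₁ρ₁` of the triangle with `ρ₁` and `ρ₂` under an
alternating form `ω` gives `t₃ω(ρ₁, ρ₃) = t₂ω(ρ₁, ρ₂)` and `t₃ω(ρ₂, ρ₃) = t₁ω(ρ₁, ρ₂)`. As the `tᵢ`
are positive, the three values of `ω` have equal nonzero absolute values only if `t₁ = t₂ = t₃`, and
then the closing relation reads `ρ₃ = ρ₂ - ρ₁`. For lattice vectors, take `ω` to be the determinant.
-/

namespace Stmt0

/-- The canonical inclusion of `ℤ × ℤ` into `ℝ × ℝ`. -/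
def toR (p : ℤ × ℤ) : ℝ × ℝ := ((p.1 : ℝ), (p.2 : ℝ))

/-- A vector of `ℤ²` is primitive if the gcd of its coordinates is `1`. -/
def Primitive (ρ : ℤ × ℤ) : Prop := Int.gcd ρ.1 ρ.2 = 1

/-- A pair of vectors of `ℤ²` is a `ℤ`-basis of `ℤ²` iff the determinant of the matrix with
these columns is `±1`. -/
def IsZBasis (u v : ℤ × ℤ) : Prop :=
  u.1 * v.2 - u.2 * v.1 = 1 ∨ u.1 * v.2 - u.2 * v.1 = -1

section AlternatingForm

variable {R M : Type*} [CommRing R] [AddCommGroup M] [Module R M] {ω : LinearMap.BilinForm R M}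
  {p q r : M} {a b c : R}

theorem mul_apply_left_eq_of_smul_eq_sub (hω : ω.IsAlt) (h : c • r = b • q - a • p) :
    c * ω p r = b * ω p q := by
  simpa [hω.self_eq_zero] using congrArg (ω p) h

theorem mul_apply_right_eq_of_smul_eq_sub (hω : ω.IsAlt) (h : c • r = b • q - a • p) :
    c * ω q r = a * ω p q := by
  simpa [hω.self_eq_zero, ← hω.neg_eq p q] using congrArg (ω q) h

end AlternatingForm

theorem eq_of_mul_eq_mul_of_abs_eq {R : Type*} [Ring R] [LinearOrder R] [IsStrictOrderedRing R]
    {s t x y : R} (hs : 0 < s) (ht : 0 < t) (hy : y ≠ 0) (h : s * x = t * y) (hxy : |x| = |y|) :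
    s = t := by
  refine mul_right_cancel₀ (abs_ne_zero.mpr hy) ?_
  calc s * |y| = |s * x| := by rw [abs_mul, abs_of_pos hs, hxy]
    _ = t * |y| := by rw [h, abs_mul, abs_of_pos ht]

theorem delzant_triangle_general {R M : Type*} [CommRing R] [LinearOrder R]
    [IsStrictOrderedRing R] [AddCommGroup M] [Module R M] [Module.IsTorsionFree R M]
    {ω : LinearMap.BilinForm R M} (hω : ω.IsAlt)
    {u v w ρ₁ ρ₂ ρ₃ : M} {t₁ t₂ t₃ : R} (ht₁ : 0 < t₁) (ht₂ : 0 < t₂) (ht₃ : 0 < t₃)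
    (h₁ : v - u = t₁ • ρ₁) (h₂ : w - u = t₂ • ρ₂) (h₃ : w - v = t₃ • ρ₃)
    (hne : ω ρ₁ ρ₂ ≠ 0) :
    (|ω ρ₁ ρ₃| = |ω ρ₁ ρ₂| ∧ |ω ρ₂ ρ₃| = |ω ρ₁ ρ₂|) ↔ ρ₃ = ρ₂ - ρ₁ := by
  have closing : t₃ • ρ₃ = t₂ • ρ₂ - t₁ • ρ₁ := by
    rw [← h₁, ← h₂, ← h₃, sub_sub_sub_cancel_right]
  constructor
  · rintro ⟨h₁₃, h₂₃⟩
    have ht₃₂ : t₃ = t₂ :=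
      eq_of_mul_eq_mul_of_abs_eq ht₃ ht₂ hne (mul_apply_left_eq_of_smul_eq_sub hω closing) h₁₃
    have ht₃₁ : t₃ = t₁ :=
      eq_of_mul_eq_mul_of_abs_eq ht₃ ht₁ hne (mul_apply_right_eq_of_smul_eq_sub hω closing) h₂₃
    rw [← ht₃₂, ← ht₃₁, ← smul_sub] at closing
    exact smul_right_injective M ht₃.ne' closing
  · rintro rfl
    have h₁₃ : ω ρ₁ (ρ₂ - ρ₁) = ω ρ₁ ρ₂ := by simp [hω.self_eq_zero]
    have h₂₃ : ω ρ₂ (ρ₂ - ρ₁) = ω ρ₁ ρ₂ := by simp [hω.self_eq_zero, ← hω.neg_eq ρ₁ ρ₂]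
    exact ⟨congrArg abs h₁₃, congrArg abs h₂₃⟩

/-- The determinant of the matrix with columns `u` and `v`, as a bilinear form on `R × R`; it
measures whether a pair of lattice vectors is a basis. -/
def detForm (R : Type*) [CommRing R] : LinearMap.BilinForm R (R × R) :=
  LinearMap.mk₂ R (fun u v ↦ u.1 * v.2 - u.2 * v.1)
    (fun _ _ _ ↦ by simp only [Prod.fst_add, Prod.snd_add]; ring)
    (fun _ _ _ ↦ by simp only [Prod.smul_fst, Prod.smul_snd, smul_eq_mul]; ring)
    (fun _ _ _ ↦ by simp only [Prod.fst_add, Prod.snd_add]; ring)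
    (fun _ _ _ ↦ by simp only [Prod.smul_fst, Prod.smul_snd, smul_eq_mul]; ring)

theorem detForm_apply {R : Type*} [CommRing R] (u v : R × R) :
    detForm R u v = u.1 * v.2 - u.2 * v.1 :=
  rfl

theorem isAlt_detForm (R : Type*) [CommRing R] : (detForm R).IsAlt := fun u ↦ by
  rw [detForm_apply, mul_comm, sub_self]

theorem toR_injective : Function.Injective toR :=
  Int.cast_injective.prodMap Int.cast_injective

theorem toR_sub (p q : ℤ × ℤ) : toR (p - q) = toR p - toR q := by
  simp [toR]

theorem isZBasis_iff_abs_detForm_toR {p q : ℤ × ℤ} :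
    IsZBasis p q ↔ |detForm ℝ (toR p) (toR q)| = 1 := by
  rw [abs_eq zero_le_one, detForm_apply, IsZBasis]
  simp only [toR]
  norm_cast

theorem delzant_triangle (u v w : ℝ × ℝ)
    (hind : LinearIndependent ℝ ![v - u, w - u])
    (ρ₁ ρ₂ ρ₃ : ℤ × ℤ)
    (hρ₁ : Primitive ρ₁) (hρ₂ : Primitive ρ₂) (hρ₃ : Primitive ρ₃)
    (t₁ t₂ t₃ : ℝ) (ht₁ : 0 < t₁) (ht₂ : 0 < t₂) (ht₃ : 0 < t₃)
    (h₁ : v - u = t₁ • toR ρ₁) (h₂ : w - u = t₂ • toR ρ₂) (h₃ : w - v = t₃ • toR ρ₃)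
    (hbasis : IsZBasis ρ₁ ρ₂) :
    (IsZBasis ρ₁ ρ₃ ∧ IsZBasis ρ₂ ρ₃) ↔ ρ₃ = ρ₂ - ρ₁ := by
  have hdet := isZBasis_iff_abs_detForm_toR.mp hbasis
  have hne : detForm ℝ (toR ρ₁) (toR ρ₂) ≠ 0 := abs_ne_zero.mp (hdet ▸ one_ne_zero)
  simpa only [hdet, ← isZBasis_iff_abs_detForm_toR, ← toR_sub, toR_injective.eq_iff] using
    delzant_triangle_general (isAlt_detForm ℝ) ht₁ ht₂ ht₃ h₁ h₂ h₃ hne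

end Stmt0
end

section
/- Let P = conv{a,b,c} ⊆ ℝ² be a triangle with affinely independent vertices a, b, c. Say that P satisfies the momentum-polytope conditions if: (i) P ⊆ 𝔱₊; (ii) for any two distinct vertices p, q of P the difference q − p is a positive real multiple of some primitive vector of ℤ² (for a vertex p, denote by ρ₁ᵖ and ρ₂ᵖ the primitive vectors of ℤ² that are positive real multiples of the differences of the two other vertices with p); (iii) for every vertex p with p₁ > p₂, the pair (ρ₁ᵖ, ρ₂ᵖ) is a ℤ-basis of ℤ²; (iv) for every vertex p with p₁ = p₂, the unordered pair {ρ₁ᵖ, ρ₂ᵖ} equals one of the following sets: {(1,1),(k+1,k)} for some k ∈ ℤ; {(−1,−1),(k+1,k)} for some k ∈ ℤ; {(1,−1),(j+1,−j)} for some j ∈ ℕ; {(1,−1),(j,−j−1)} for some j ∈ ℕ; {(j+1,−j),(j,−j−1)} for some j ∈ ℕ. Then P satisfies the momentum-polytope conditions if and only if P is one of the following triangles: (1) (s, s−r) + t·conv{(0,0), (b₁,−a₁), (b₂,−a₂)} where r, t ∈ ℝ with r > 0 and t > 0, s ∈ ℝ, and a₁, b₁, a₂, b₂ ∈ ℤ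 with a₁b₂ − a₂b₁ = 1 and aᵢ + bᵢ ≥ 0 for i ∈ {1,2}; (2) (s,s) + t·conv{(0,0), (ℓ,ℓ), (k+1,k)} where s ∈ ℝ, t > 0, k ∈ ℤ, ℓ ∈ {1,−1}; (3) (s,s) + t·conv{(0,0), (1,−1), (j+1,−j)} where s ∈ ℝ, t > 0, j ∈ ℕ; (4) (s,s) + t·conv{(0,0), (1,−1), (j,−j−1)} where s ∈ ℝ, t > 0, j ∈ ℕ; (5) (s,s) + t·conv{(0,0), (1,0), (0,−1)} where s ∈ ℝ, t > 0. -/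
/-!
Let `p` be a vertex of a momentum triangle at which `x - y` is minimal, with edge directions `u`
and `v`, and let `w` be the direction of the opposite edge. The only admissible wall pairs that are
not lattice bases consist of two directions leaving the wall, so the directions at the two other
vertices form bases. Taking determinants in `t₂ v = t₁ u + t₃ w` then gives
`t₁ |det u v| = t₃ = t₂ |det u v|`, hence `t₁ = t₂` and `v - u = |det u v| w`; this divisibility
forces the directions at `p` to form a basis as well. Conversely, if `p` lies in the chamber, `u`
and `v` form a basis pointing weakly away from the wall, and the wall condition holds at `p`, then
it also holds at the other vertices: an edge along the wall is `±(1, 1)`, and the basis condition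
leaves only `(k + 1, k)` for the other direction.
-/

namespace Stmt1

/-- The canonical inclusion of `ℤ × ℤ` into `ℝ × ℝ`. -/
def toR (p : ℤ × ℤ) : ℝ × ℝ := ((p.1 : ℝ), (p.2 : ℝ))

/-- A vector of `ℤ²` is primitive if the gcd of its coordinates is `1`. -/
def Primitive (ρ : ℤ × ℤ) : Prop := Int.gcd ρ.1 ρ.2 = 1

/-- A pair of vectors of `ℤ²` is a `ℤ`-basis of `ℤ²` iff the determinant of the matrix with
these columns is `±1`. -/
def IsZBasis (u v : ℤ × ℤ) : Prop :=
  u.1 * v.2 - u.2 * v.1 = 1 ∨ u.1 * v.2 - u.2 * v.1 = -1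

/-- `ρ` is the primitive vector of `ℤ²` which is a positive real multiple of `q - p`. -/
def PrimDir (p q : ℝ × ℝ) (ρ : ℤ × ℤ) : Prop :=
  Primitive ρ ∧ ∃ t : ℝ, 0 < t ∧ q - p = t • toR ρ

/-- The unordered pair `{ρ₁, ρ₂}` is one of the admissible pairs at a vertex lying on the
wall of the Weyl chamber (condition (4) of Proposition 3.3 of the paper). -/
def WallSet (ρ₁ ρ₂ : ℤ × ℤ) : Prop :=
  (∃ k : ℤ, ({ρ₁, ρ₂} : Set (ℤ × ℤ)) = {(1, 1), (k + 1, k)}) ∨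
  (∃ k : ℤ, ({ρ₁, ρ₂} : Set (ℤ × ℤ)) = {(-1, -1), (k + 1, k)}) ∨
  (∃ j : ℕ, ({ρ₁, ρ₂} : Set (ℤ × ℤ)) = {(1, -1), ((j : ℤ) + 1, -(j : ℤ))}) ∨
  (∃ j : ℕ, ({ρ₁, ρ₂} : Set (ℤ × ℤ)) = {(1, -1), ((j : ℤ), -(j : ℤ) - 1)}) ∨
  (∃ j : ℕ, ({ρ₁, ρ₂} : Set (ℤ × ℤ)) = {((j : ℤ) + 1, -(j : ℤ)), ((j : ℤ), -(j : ℤ) - 1)})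

/-- The conditions at the vertex `p` of the triangle with vertices `p`, `q`, `r`:
the edge directions at `p` are positive multiples of primitive integral vectors
`ρ₁ᵖ`, `ρ₂ᵖ`, and these form a `ℤ`-basis if `p` lies in the interior of the Weyl chamber,
resp. an admissible wall pair if `p` lies on the wall. -/
def VertexCond (p q r : ℝ × ℝ) : Prop :=
  (∃ ρ, PrimDir p q ρ) ∧ (∃ ρ, PrimDir p r ρ) ∧
  ∀ ρ₁ ρ₂, PrimDir p q ρ₁ → PrimDir p r ρ₂ →
    (p.2 < p.1 → IsZBasis ρ₁ ρ₂) ∧ (p.1 = p.2 → WallSet ρ₁ ρ₂)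

/-- The momentum-polytope conditions for the triangle with vertices `a`, `b`, `c`
(Proposition 3.3 of the paper, specialized to triangles). -/
def MPConds (a b c : ℝ × ℝ) : Prop :=
  convexHull ℝ ({a, b, c} : Set (ℝ × ℝ)) ⊆ {v : ℝ × ℝ | v.2 ≤ v.1} ∧
  VertexCond a b c ∧ VertexCond b a c ∧ VertexCond c a b

section ConvexHull

variable {𝕜 E : Type*} [Field 𝕜] [LinearOrder 𝕜] [IsStrictOrderedRing 𝕜]
  [AddCommGroup E] [Module 𝕜 E]

lemma mem_extremePoints_convexHull_insert {s : Set E} {x : E} (hx : x ∉ convexHull 𝕜 s) :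
    x ∈ (convexHull 𝕜 (insert x s)).extremePoints 𝕜 := by
  rcases s.eq_empty_or_nonempty with rfl | hs
  · simp
  refine mem_extremePoints_iff_left.2 ⟨subset_convexHull 𝕜 _ (Set.mem_insert x s), ?_⟩
  simp only [convexHull_insert hs, mem_convexJoin, Set.mem_singleton_iff, exists_eq_left]
  rintro _ ⟨y, hy, k, l, -, hl, hkl, rfl⟩ _ ⟨z, hz, m, n, -, hn, hmn, rfl⟩
    ⟨a, b, ha, hb, hab, hxab⟩
  by_contra hne
  have hl_pos : 0 < l := hl.lt_of_ne' fun h ↦ hne (by simp_all)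
  have hpos : 0 < a * l + b * n := by positivity
  have hcomb : (a * l + b * n) • x = (a * l) • y + (b * n) • z := by
    have hweights : 1 - (a * k + b * m) = a * l + b * n := by
      linear_combination -hab - a * hkl - b * hmn
    rw [← hweights]
    linear_combination (norm := module) -hxab
  have hmem := convex_iff_div.1 (convex_convexHull 𝕜 s) hy hz (mul_nonneg ha.le hl)
    (mul_nonneg hb.le hn) hpos
  refine hx ?_
  rwa [div_eq_inv_mul, div_eq_inv_mul, mul_smul _ (a * l), mul_smul _ (b * n), ← smul_add, ← hcomb,
    inv_smul_smul₀ hpos.ne'] at hmem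

lemma range_subset_of_convexHull_eq {ι : Type*} {p : ι → E} (hp : AffineIndependent 𝕜 p)
    {s : Set E} (h : convexHull 𝕜 (Set.range p) = convexHull 𝕜 s) : Set.range p ⊆ s := by
  rintro _ ⟨i, rfl⟩
  have hi : p i ∉ convexHull 𝕜 (p '' (Set.univ \ {i})) := fun hmem ↦
    hp.notMem_affineSpan_sdiff i Set.univ (convexHull_subset_affineSpan _ hmem)
  have hrange : insert (p i) (p '' (Set.univ \ {i})) = Set.range p := by
    rw [← Set.image_insert_eq, Set.insert_sdiff_singleton, Set.insert_eq_of_mem (Set.mem_univ i),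
      Set.image_univ]
  have hext := mem_extremePoints_convexHull_insert hi
  rw [hrange, h] at hext
  exact extremePoints_convexHull_subset hext

end ConvexHull

lemma of_triple_subset {α : Type*} {M : α → α → α → Prop}
    (swap : ∀ x y z, M x y z → M y x z) (rotate : ∀ x y z, M x y z → M y z x)
    {a b c p q r : α} (hinj : Function.Injective ![a, b, c])
    (h : ({a, b, c} : Set α) ⊆ {p, q, r}) (hM : M p q r) : M a b c := by
  have hab : a ≠ b := hinj.ne (show (0 : Fin 3) ≠ 1 by decide)
  have hac : a ≠ c := hinj.ne (show (0 : Fin 3) ≠ 2 by decide)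
  have hbc : b ≠ c := hinj.ne (show (1 : Fin 3) ≠ 2 by decide)
  simp only [Set.insert_subset_iff, Set.singleton_subset_iff, Set.mem_insert_iff,
    Set.mem_singleton_iff] at h
  grind

/-- The determinant of the integer matrix with columns `u` and `v`. -/
def det (u v : ℤ × ℤ) : ℤ := u.1 * v.2 - u.2 * v.1

lemma det_swap (u v : ℤ × ℤ) : det v u = -det u v := by
  simp only [det]
  ring

lemma det_neg_sub (u v : ℤ × ℤ) : det (-u) (v - u) = -det u v := by
  simp only [det, Prod.fst_neg, Prod.snd_neg, Prod.fst_sub, Prod.snd_sub]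
  ring

lemma det_neg_left (u v : ℤ × ℤ) : det (-u) v = -det u v := by
  simp only [det, Prod.fst_neg, Prod.snd_neg]
  ring

lemma isZBasis_iff_isUnit_det {u v : ℤ × ℤ} : IsZBasis u v ↔ IsUnit (det u v) :=
  Int.isUnit_iff.symm

lemma isZBasis_comm {u v : ℤ × ℤ} : IsZBasis u v ↔ IsZBasis v u := by
  rw [isZBasis_iff_isUnit_det, isZBasis_iff_isUnit_det, det_swap, IsUnit.neg_iff]

lemma isZBasis_neg_left {u v : ℤ × ℤ} : IsZBasis (-u) v ↔ IsZBasis u v := by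
  rw [isZBasis_iff_isUnit_det, isZBasis_iff_isUnit_det, det_neg_left, IsUnit.neg_iff]

lemma isZBasis_neg_right {u v : ℤ × ℤ} : IsZBasis u (-v) ↔ IsZBasis u v := by
  rw [isZBasis_comm, isZBasis_neg_left, isZBasis_comm]

namespace IsZBasis

variable {u v : ℤ × ℤ}

lemma neg_sub (h : IsZBasis u v) : IsZBasis (-u) (v - u) := by
  rw [isZBasis_iff_isUnit_det] at h ⊢
  rw [det_neg_sub]
  exact h.neg

lemma primitive_left (h : IsZBasis u v) : Primitive u := by
  refine Int.isCoprime_iff_gcd_eq_one.1 ?_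
  rcases h with h | h
  · exact ⟨v.2, -v.1, by linear_combination h⟩
  · exact ⟨-v.2, v.1, by linear_combination -h⟩

lemma primitive_right (h : IsZBasis u v) : Primitive v := (isZBasis_comm.1 h).primitive_left

lemma wallSet (h : IsZBasis u v) (hu : u.1 = u.2) (hv : v.2 ≤ v.1) : WallSet u v := by
  obtain ⟨m, m'⟩ := u
  obtain ⟨x, y⟩ := v
  obtain rfl : m = m' := hu
  have hdet : IsUnit (m * (y - x)) := by
    convert isZBasis_iff_isUnit_det.1 h using 1
    simp only [det]
    ring
  have hx : x = y + 1 := by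
    have := Int.isUnit_iff.1 (isUnit_of_mul_isUnit_right hdet)
    have : y ≤ x := hv
    omega
  subst hx
  rcases Int.isUnit_iff.1 (isUnit_of_mul_isUnit_left hdet) with rfl | rfl
  · exact .inl ⟨y, rfl⟩
  · exact .inr (.inl ⟨y, rfl⟩)

end IsZBasis

namespace WallSet

variable {u v : ℤ × ℤ}

lemma symm (h : WallSet u v) : WallSet v u := by
  unfold WallSet at h ⊢
  rwa [Set.pair_comm v u]

lemma snd_le_fst (h : WallSet u v) : u.2 ≤ u.1 := by
  simp only [WallSet, Set.pair_eq_pair_iff] at h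
  rcases h with ⟨k, h⟩ | ⟨k, h⟩ | ⟨j, h⟩ | ⟨j, h⟩ | ⟨j, h⟩ <;>
    rcases h with ⟨rfl, -⟩ | ⟨rfl, -⟩ <;> dsimp only <;> omega

lemma isZBasis_or (h : WallSet u v) : IsZBasis u v ∨
    ∃ j : ℕ, ({u, v} : Set (ℤ × ℤ)) = {((j : ℤ) + 1, -(j : ℤ)), ((j : ℤ), -(j : ℤ) - 1)} := by
  rcases h with ⟨k, h⟩ | ⟨k, h⟩ | ⟨j, h⟩ | ⟨j, h⟩ | h
  on_goal 5 => exact .inr h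
  all_goals
    left
    rcases Set.pair_eq_pair_iff.1 h with ⟨rfl, rfl⟩ | ⟨rfl, rfl⟩ <;> dsimp only [IsZBasis] <;> omega

lemma isZBasis_of_fst_le_snd (h : WallSet u v) (hu : u.1 ≤ u.2) : IsZBasis u v := by
  refine h.isZBasis_or.resolve_right ?_
  rintro ⟨j, h⟩
  rcases Set.pair_eq_pair_iff.1 h with ⟨rfl, rfl⟩ | ⟨rfl, rfl⟩ <;> dsimp only at hu <;> omega

lemma isZBasis_of_det_dvd (h : WallSet u v) (hd : det u v ∣ v.1 - u.1) : IsZBasis u v := by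
  rcases h.isZBasis_or with h | ⟨j, h⟩
  · exact h
  · refine isZBasis_iff_isUnit_det.2 (isUnit_of_dvd_unit hd ?_)
    rcases Set.pair_eq_pair_iff.1 h with ⟨rfl, rfl⟩ | ⟨rfl, rfl⟩ <;> simp

end WallSet

lemma toR_neg (u : ℤ × ℤ) : toR (-u) = -toR u := by
  simp [toR]

lemma toR_sub (u v : ℤ × ℤ) : toR (u - v) = toR u - toR v := by
  simp [toR]

lemma Primitive.eq_of_smul_toR_eq {u v : ℤ × ℤ} (hu : Primitive u) (hv : Primitive v) {s t : ℝ}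
    (hs : 0 < s) (ht : 0 < t) (h : s • toR u = t • toR v) : u = v := by
  obtain ⟨x, y, hxy⟩ := Int.isCoprime_iff_gcd_eq_one.2 hu
  have h₁ : s * u.1 = t * v.1 := congrArg Prod.fst h
  have h₂ : s * u.2 = t * v.2 := congrArg Prod.snd h
  obtain ⟨m, hm⟩ : ∃ m : ℤ, m = x * v.1 + y * v.2 := ⟨_, rfl⟩
  have hst : s = t * m := by
    have : (x * u.1 + y * u.2 : ℝ) = 1 := mod_cast hxy
    rw [hm]
    push_cast
    linear_combination x * h₁ + y * h₂ - s * this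
  have hv₁ : v.1 = m * u.1 := by
    rw [hst, mul_assoc] at h₁
    exact mod_cast (mul_left_cancel₀ ht.ne' h₁).symm
  have hv₂ : v.2 = m * u.2 := by
    rw [hst, mul_assoc] at h₂
    exact mod_cast (mul_left_cancel₀ ht.ne' h₂).symm
  have hm_pos : 0 < m := by
    rw [hst] at hs
    exact Int.cast_pos.1 (pos_of_mul_pos_right hs ht.le)
  have hm_one : m.natAbs = 1 := by
    rw [Primitive] at hu hv
    rwa [hv₁, hv₂, Int.gcd_mul_left, hu, mul_one] at hv
  obtain rfl : m = 1 := by omega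
  ext <;> simp [hv₁, hv₂]

namespace PrimDir

variable {p q r : ℝ × ℝ} {u v w : ℤ × ℤ}

lemma symm (h : PrimDir p q u) : PrimDir q p (-u) := by
  obtain ⟨hu, t, ht, h⟩ := h
  refine ⟨by simpa [Primitive] using hu, t, ht, ?_⟩
  rw [toR_neg, smul_neg, ← h, neg_sub]

lemma unique (hu : PrimDir p q u) (hv : PrimDir p q v) : u = v := by
  obtain ⟨hu, s, hs, hsu⟩ := hu
  obtain ⟨hv, t, ht, htv⟩ := hv
  exact hu.eq_of_smul_toR_eq hv hs ht (hsu.symm.trans htv)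

lemma sub_le_sub_iff (h : PrimDir p q u) : p.1 - p.2 ≤ q.1 - q.2 ↔ u.2 ≤ u.1 := by
  obtain ⟨-, t, ht, h⟩ := h
  have h₁ : q.1 - p.1 = t * u.1 := congrArg Prod.fst h
  have h₂ : q.2 - p.2 = t * u.2 := congrArg Prod.snd h
  have hdiff : (q.1 - q.2) - (p.1 - p.2) = t * (u.1 - u.2) := by linear_combination h₁ - h₂
  rw [← sub_nonneg, hdiff, mul_nonneg_iff_of_pos_left ht, sub_nonneg, Int.cast_le]

lemma exists_common_scale (hu : PrimDir p q u) (hv : PrimDir p r v) (hw : PrimDir q r w)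
    (huw : IsZBasis u w) (hvw : IsZBasis v w) :
    ∃ t : ℝ, 0 < t ∧ q = p + t • toR u ∧ r = p + t • toR v ∧ det u v ∣ v.1 - u.1 := by
  obtain ⟨-, t₁, ht₁, hu⟩ := hu
  obtain ⟨-, t₂, ht₂, hv⟩ := hv
  obtain ⟨-, t₃, ht₃, hw⟩ := hw
  have hsum : t₂ • toR v = t₁ • toR u + t₃ • toR w := by
    rw [← hu, ← hv, ← hw]
    abel
  have h₁ : t₂ * v.1 = t₁ * u.1 + t₃ * w.1 := congrArg Prod.fst hsum
  have h₂ : t₂ * v.2 = t₁ * u.2 + t₃ * w.2 := congrArg Prod.snd hsum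
  have abs_det {x : ℤ × ℤ} (hx : IsZBasis x w) : |(det x w : ℝ)| = 1 :=
    mod_cast Int.isUnit_iff_abs_eq.1 (isZBasis_iff_isUnit_det.1 hx)
  have hv_scale : t₂ * |(det u v : ℝ)| = t₃ := by
    have : t₂ * (det u v : ℝ) = t₃ * det u w := by
      simp only [det]
      push_cast
      linear_combination (u.1 : ℝ) * h₂ - u.2 * h₁
    simpa only [abs_mul, abs_of_pos, ht₂, ht₃, abs_det huw, mul_one] using congrArg abs this
  have hu_scale : t₁ * |(det u v : ℝ)| = t₃ := by
    have : t₁ * (det u v : ℝ) = t₃ * det v w := by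
      simp only [det]
      push_cast
      linear_combination (v.1 : ℝ) * h₂ - v.2 * h₁
    simpa only [abs_mul, abs_of_pos, ht₁, ht₃, abs_det hvw, mul_one] using congrArg abs this
  obtain rfl : t₁ = t₂ :=
    mul_right_cancel₀ (right_ne_zero_of_mul (hu_scale.trans_ne ht₃.ne'))
      (hu_scale.trans hv_scale.symm)
  refine ⟨t₁, ht₁, eq_add_of_sub_eq' hu, eq_add_of_sub_eq' hv, ?_⟩
  have hw_scale : (v.1 : ℝ) - u.1 = |(det u v : ℝ)| * w.1 := by
    refine mul_left_cancel₀ ht₁.ne' ?_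
    linear_combination h₁ - w.1 * hu_scale
  exact (abs_dvd _ _).1 ⟨w.1, mod_cast hw_scale⟩

end PrimDir

namespace VertexCond

variable {p q r : ℝ × ℝ} {u v : ℤ × ℤ}

lemma symm (h : VertexCond p q r) : VertexCond p r q :=
  ⟨h.2.1, h.1, fun _ _ hq hr ↦
    ⟨fun hp ↦ isZBasis_comm.1 ((h.2.2 _ _ hr hq).1 hp), fun hp ↦ ((h.2.2 _ _ hr hq).2 hp).symm⟩⟩

lemma of_primDir (hu : PrimDir p q u) (hv : PrimDir p r v) (hbasis : IsZBasis u v)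
    (hwall : p.1 = p.2 → WallSet u v) : VertexCond p q r := by
  refine ⟨⟨u, hu⟩, ⟨v, hv⟩, fun u' v' hu' hv' ↦ ?_⟩
  rw [← hu.unique hu', ← hv.unique hv']
  exact ⟨fun _ ↦ hbasis, hwall⟩

lemma isZBasis_of_fst_le_snd (h : VertexCond p q r) (hp : p.2 ≤ p.1) (hu : PrimDir p q u)
    (hv : PrimDir p r v) (hle : u.1 ≤ u.2) : IsZBasis u v := by
  obtain ⟨hbasis, hwall⟩ := h.2.2 u v hu hv
  rcases hp.lt_or_eq with hlt | heq
  · exact hbasis hlt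
  · exact (hwall heq.symm).isZBasis_of_fst_le_snd hle

end VertexCond

/-- `u` and `v` are admissible edge directions of a momentum triangle at a vertex `p` where `x - y`
is minimal. The basis condition is imposed even if `p` lies on the wall, so that the triangle is
`p + t · conv {0, u, v}` for some `t > 0`. -/
structure IsLowestCorner (p : ℝ × ℝ) (u v : ℤ × ℤ) : Prop where
  mem_chamber : p.2 ≤ p.1
  isZBasis : IsZBasis u v
  left_le : u.2 ≤ u.1
  right_le : v.2 ≤ v.1
  wallSet : p.1 = p.2 → WallSet u v

namespace IsLowestCorner

variable {p : ℝ × ℝ} {u v : ℤ × ℤ} {t : ℝ}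

lemma symm (h : IsLowestCorner p u v) : IsLowestCorner p v u :=
  ⟨h.mem_chamber, isZBasis_comm.1 h.isZBasis, h.right_le, h.left_le, fun hp ↦ (h.wallSet hp).symm⟩

lemma of_wallSet {s : ℝ} (hwall : WallSet u v) (hbasis : IsZBasis u v) :
    IsLowestCorner (s, s) u v :=
  ⟨le_rfl, hbasis, hwall.snd_le_fst, hwall.symm.snd_le_fst, fun _ ↦ hwall⟩

lemma primDir_left (h : IsLowestCorner p u v) (ht : 0 < t) : PrimDir p (p + t • toR u) u :=
  ⟨h.isZBasis.primitive_left, t, ht, add_sub_cancel_left _ _⟩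

lemma primDir_opposite (h : IsLowestCorner p u v) (ht : 0 < t) :
    PrimDir (p + t • toR u) (p + t • toR v) (v - u) := by
  refine ⟨h.isZBasis.neg_sub.primitive_right, t, ht, ?_⟩
  rw [toR_sub]
  module

lemma left_mem_chamber (h : IsLowestCorner p u v) (ht : 0 < t) :
    (p + t • toR u).2 ≤ (p + t • toR u).1 := by
  linarith [h.mem_chamber, (h.primDir_left ht).sub_le_sub_iff.2 h.left_le]

lemma left_vertexCond (h : IsLowestCorner p u v) (ht : 0 < t) :
    VertexCond (p + t • toR u) p (p + t • toR v) := by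
  refine .of_primDir (h.primDir_left ht).symm (h.primDir_opposite ht) h.isZBasis.neg_sub
    fun hwall ↦ ?_
  have hu : u.1 = u.2 := by
    refine (h.left_le.antisymm ?_).symm
    simpa using (h.primDir_left ht).symm.sub_le_sub_iff.1 (by linarith [h.mem_chamber])
  refine h.isZBasis.neg_sub.wallSet (by simpa using hu) ?_
  rw [Prod.fst_sub, Prod.snd_sub, hu]
  exact sub_le_sub_right h.right_le _

lemma mpConds (h : IsLowestCorner p u v) (ht : 0 < t) :
    MPConds p (p + t • toR u) (p + t • toR v) := by
  refine ⟨convexHull_min ?_ ?_, .of_primDir (h.primDir_left ht) (h.symm.primDir_left ht)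
    h.isZBasis h.wallSet, h.left_vertexCond ht, h.symm.left_vertexCond ht⟩
  · rintro x (rfl | rfl | rfl)
    exacts [h.mem_chamber, h.left_mem_chamber ht, h.symm.left_mem_chamber ht]
  · simpa using convex_halfSpace_le (LinearMap.snd ℝ ℝ ℝ - LinearMap.fst ℝ ℝ ℝ).isLinear 0

end IsLowestCorner

namespace MPConds

variable {a b c p q r : ℝ × ℝ}

lemma swap (h : MPConds p q r) : MPConds q p r := by
  obtain ⟨hchamber, hp, hq, hr⟩ := h
  exact ⟨by rwa [Set.insert_comm], hq, hp, hr.symm⟩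

lemma rotate (h : MPConds p q r) : MPConds q r p := by
  obtain ⟨hchamber, hp, hq, hr⟩ := h
  exact ⟨by rwa [Set.pair_comm, Set.insert_comm], hq.symm, hr.symm, hp⟩

lemma of_convexHull_eq (h : MPConds p q r) (hind : AffineIndependent ℝ ![a, b, c])
    (heq : convexHull ℝ {a, b, c} = convexHull ℝ {p, q, r}) : MPConds a b c := by
  have hrange : Set.range ![a, b, c] = {a, b, c} := by
    simp only [Matrix.range_cons, Matrix.range_empty, Set.union_empty, Set.singleton_union]
  refine of_triple_subset (M := MPConds) (fun _ _ _ ↦ swap) (fun _ _ _ ↦ rotate) hind.injective ?_ h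
  rw [← hrange] at heq ⊢
  exact range_subset_of_convexHull_eq hind heq

lemma exists_lowest (h : MPConds a b c) :
    ∃ p q r, ({a, b, c} : Set (ℝ × ℝ)) = {p, q, r} ∧ MPConds p q r ∧
      p.1 - p.2 ≤ q.1 - q.2 ∧ p.1 - p.2 ≤ r.1 - r.2 := by
  by_cases ha : a.1 - a.2 ≤ b.1 - b.2 ∧ a.1 - a.2 ≤ c.1 - c.2
  · exact ⟨a, b, c, rfl, h, ha⟩
  rcases le_total (b.1 - b.2) (c.1 - c.2) with hbc | hcb
  · refine ⟨b, c, a, by rw [Set.insert_comm, Set.pair_comm], h.rotate, hbc, ?_⟩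
    grind
  · refine ⟨c, a, b, by rw [Set.pair_comm, Set.insert_comm], h.rotate.rotate, ?_, hcb⟩
    grind

lemma exists_isLowestCorner (h : MPConds p q r) (hq : p.1 - p.2 ≤ q.1 - q.2)
    (hr : p.1 - p.2 ≤ r.1 - r.2) :
    ∃ (t : ℝ) (u v : ℤ × ℤ), 0 < t ∧ IsLowestCorner p u v ∧
      q = p + t • toR u ∧ r = p + t • toR v := by
  obtain ⟨hchamber, ⟨⟨u, hu⟩, ⟨v, hv⟩, hp_cond⟩, hq_cond, hr_cond⟩ := h
  obtain ⟨w, hw⟩ := hq_cond.2.1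
  have mem_chamber {x : ℝ × ℝ} (hx : x ∈ ({p, q, r} : Set (ℝ × ℝ))) : x.2 ≤ x.1 :=
    hchamber (subset_convexHull ℝ _ hx)
  have hu_le : u.2 ≤ u.1 := hu.sub_le_sub_iff.1 hq
  have hv_le : v.2 ≤ v.1 := hv.sub_le_sub_iff.1 hr
  have huw : IsZBasis (-u) w :=
    hq_cond.isZBasis_of_fst_le_snd (mem_chamber (by simp)) hu.symm hw (by simpa using hu_le)
  have hvw : IsZBasis (-v) (-w) :=
    hr_cond.isZBasis_of_fst_le_snd (mem_chamber (by simp)) hv.symm hw.symm (by simpa using hv_le)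
  obtain ⟨t, ht, hqt, hrt, hdvd⟩ := hu.exists_common_scale hv hw (isZBasis_neg_left.1 huw)
    (isZBasis_neg_right.1 (isZBasis_neg_left.1 hvw))
  obtain ⟨hbasis, hwall⟩ := hp_cond u v hu hv
  have hp : p.2 ≤ p.1 := mem_chamber (by simp)
  refine ⟨t, u, v, ht, ⟨hp, ?_, hu_le, hv_le, hwall⟩, hqt, hrt⟩
  rcases hp.lt_or_eq with hlt | heq
  · exact hbasis hlt
  · exact (hwall heq.symm).isZBasis_of_det_dvd hdvd

end MPConds

/-- The triangle `p + t · conv {0, u, v}` with lattice directions `u` and `v`, as an image of the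
model triangle because the classification lists it in this form. -/
def latticeTriangle (p : ℝ × ℝ) (t : ℝ) (u v : ℤ × ℤ) : Set (ℝ × ℝ) :=
  (fun y ↦ p + t • y) '' convexHull ℝ {(0, 0), toR u, toR v}

lemma latticeTriangle_eq_convexHull (p : ℝ × ℝ) (t : ℝ) (u v : ℤ × ℤ) :
    latticeTriangle p t u v = convexHull ℝ {p, p + t • toR u, p + t • toR v} := by
  have h := (AffineMap.const ℝ (ℝ × ℝ) p + t • AffineMap.id ℝ (ℝ × ℝ)).image_convexHull
    {(0, 0), toR u, toR v}
  simp only [Set.image_insert_eq, Set.image_singleton] at h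
  refine Eq.trans h ?_
  simp [← Prod.zero_eq_mk]

lemma latticeTriangle_congr (p : ℝ × ℝ) (t : ℝ) {u v u' v' : ℤ × ℤ}
    (h : ({u, v} : Set (ℤ × ℤ)) = {u', v'}) :
    latticeTriangle p t u v = latticeTriangle p t u' v' := by
  have himage := congrArg (toR '' ·) h
  simp only [Set.image_pair] at himage
  rw [latticeTriangle, himage, latticeTriangle]

lemma mpConds_iff_exists_isLowestCorner {a b c : ℝ × ℝ}
    (hind : AffineIndependent ℝ ![a, b, c]) :
    MPConds a b c ↔ ∃ (p : ℝ × ℝ) (t : ℝ) (u v : ℤ × ℤ), 0 < t ∧ IsLowestCorner p u v ∧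
      convexHull ℝ {a, b, c} = latticeTriangle p t u v := by
  simp only [latticeTriangle_eq_convexHull]
  constructor
  · intro h
    obtain ⟨p, q, r, hset, h, hq, hr⟩ := h.exists_lowest
    obtain ⟨t, u, v, ht, hcorner, rfl, rfl⟩ := h.exists_isLowestCorner hq hr
    exact ⟨p, t, u, v, ht, hcorner, by rw [hset]⟩
  · rintro ⟨p, t, u, v, ht, hcorner, heq⟩
    exact (hcorner.mpConds ht).of_convexHull_eq hind heq

/-- `P` belongs to one of the five families of the classification, the directions being written as
integer vectors. -/
def IsListed (P : Set (ℝ × ℝ)) : Prop :=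
  (∃ (r s t : ℝ) (a₁ b₁ a₂ b₂ : ℤ), 0 < r ∧ 0 < t ∧ a₁ * b₂ - a₂ * b₁ = 1 ∧
    0 ≤ a₁ + b₁ ∧ 0 ≤ a₂ + b₂ ∧ P = latticeTriangle (s, s - r) t (b₁, -a₁) (b₂, -a₂)) ∨
  (∃ (s t : ℝ) (k ℓ : ℤ), 0 < t ∧ (ℓ = 1 ∨ ℓ = -1) ∧
    P = latticeTriangle (s, s) t (ℓ, ℓ) (k + 1, k)) ∨
  (∃ (s t : ℝ) (j : ℕ), 0 < t ∧ P = latticeTriangle (s, s) t (1, -1) (j + 1, -j)) ∨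
  (∃ (s t : ℝ) (j : ℕ), 0 < t ∧ P = latticeTriangle (s, s) t (1, -1) (j, -j - 1)) ∨
  (∃ s t : ℝ, 0 < t ∧ P = latticeTriangle (s, s) t (1, 0) (0, -1))

lemma IsListed.exists_isLowestCorner {P : Set (ℝ × ℝ)} (h : IsListed P) :
    ∃ (p : ℝ × ℝ) (t : ℝ) (u v : ℤ × ℤ), 0 < t ∧ IsLowestCorner p u v ∧
      P = latticeTriangle p t u v := by
  rcases h with ⟨r, s, t, a₁, b₁, a₂, b₂, hr, ht, hdet, h₁, h₂, rfl⟩ |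
    ⟨s, t, k, ℓ, ht, hℓ, rfl⟩ | ⟨s, t, j, ht, rfl⟩ | ⟨s, t, j, ht, rfl⟩ | ⟨s, t, ht, rfl⟩
  all_goals refine ⟨_, t, _, _, ht, ?_, rfl⟩
  · refine ⟨by simpa using hr.le, .inl ?_, ?_, ?_, fun hwall ↦ ?_⟩
    · linear_combination hdet
    · exact neg_le_iff_add_nonneg'.2 h₁
    · exact neg_le_iff_add_nonneg'.2 h₂
    · exact absurd hwall.symm (sub_lt_self s hr).ne
  · rcases hℓ with rfl | rfl
    · exact .of_wallSet (.inl ⟨k, rfl⟩) (.inr (by ring))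
    · exact .of_wallSet (.inr (.inl ⟨k, rfl⟩)) (.inl (by ring))
  · exact .of_wallSet (.inr (.inr (.inl ⟨j, rfl⟩))) (.inl (by ring))
  · exact .of_wallSet (.inr (.inr (.inr (.inl ⟨j, rfl⟩)))) (.inr (by ring))
  · exact .of_wallSet (.inr (.inr (.inr (.inr ⟨0, rfl⟩)))) (.inr (by norm_num))

lemma isListed_of_det_eq_one {p : ℝ × ℝ} {u v : ℤ × ℤ} {t : ℝ} (ht : 0 < t) (hp : p.2 < p.1)
    (hu : u.2 ≤ u.1) (hv : v.2 ≤ v.1) (hdet : det u v = 1) :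
    IsListed (latticeTriangle p t u v) := by
  refine .inl ⟨p.1 - p.2, p.1, t, -u.2, u.1, -v.2, v.1, sub_pos.2 hp, ht, ?_, ?_, ?_, ?_⟩
  · rw [← hdet, det]
    ring
  · linarith
  · linarith
  · simp only [sub_sub_cancel, neg_neg]

lemma WallSet.isListed {u v : ℤ × ℤ} (hwall : WallSet u v) (hbasis : IsZBasis u v) (s : ℝ) {t : ℝ}
    (ht : 0 < t) : IsListed (latticeTriangle (s, s) t u v) := by
  rcases hwall with ⟨k, h⟩ | ⟨k, h⟩ | ⟨j, h⟩ | ⟨j, h⟩ | ⟨j, h⟩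
  · exact .inr (.inl ⟨s, t, k, 1, ht, .inl rfl, latticeTriangle_congr _ t h⟩)
  · exact .inr (.inl ⟨s, t, k, -1, ht, .inr rfl, latticeTriangle_congr _ t h⟩)
  · exact .inr (.inr (.inl ⟨s, t, j, ht, latticeTriangle_congr _ t h⟩))
  · exact .inr (.inr (.inr (.inl ⟨s, t, j, ht, latticeTriangle_congr _ t h⟩)))
  · obtain rfl : j = 0 := by
      rcases Set.pair_eq_pair_iff.1 h with ⟨rfl, rfl⟩ | ⟨rfl, rfl⟩ <;>
        dsimp only [IsZBasis] at hbasis <;> grind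
    exact .inr (.inr (.inr (.inr ⟨s, t, ht, latticeTriangle_congr _ t h⟩)))

lemma IsLowestCorner.isListed {p : ℝ × ℝ} {u v : ℤ × ℤ} {t : ℝ} (h : IsLowestCorner p u v)
    (ht : 0 < t) : IsListed (latticeTriangle p t u v) := by
  rcases h.mem_chamber.lt_or_eq with hlt | heq
  · rcases h.isZBasis with hdet | hdet
    · exact isListed_of_det_eq_one ht hlt h.left_le h.right_le hdet
    · rw [latticeTriangle_congr p t (Set.pair_comm u v)]
      refine isListed_of_det_eq_one ht hlt h.right_le h.left_le ?_
      rw [det_swap, det, hdet, neg_neg]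
  · obtain ⟨s, s'⟩ := p
    obtain rfl : s' = s := heq
    exact (h.wallSet rfl).isListed h.isZBasis s' ht

theorem triangles_classification (a b c : ℝ × ℝ)
    (hind : AffineIndependent ℝ ![a, b, c]) :
    MPConds a b c ↔
      ((∃ (r s t : ℝ) (a₁ b₁ a₂ b₂ : ℤ), 0 < r ∧ 0 < t ∧
        a₁ * b₂ - a₂ * b₁ = 1 ∧ 0 ≤ a₁ + b₁ ∧ 0 ≤ a₂ + b₂ ∧
        convexHull ℝ ({a, b, c} : Set (ℝ × ℝ)) =
          (fun v : ℝ × ℝ => ((s, s - r) : ℝ × ℝ) + t • v) ''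
            convexHull ℝ ({((0 : ℝ), (0 : ℝ)), ((b₁ : ℝ), -(a₁ : ℝ)),
              ((b₂ : ℝ), -(a₂ : ℝ))} : Set (ℝ × ℝ))) ∨
      (∃ (s t : ℝ) (k ℓ : ℤ), 0 < t ∧ (ℓ = 1 ∨ ℓ = -1) ∧
        convexHull ℝ ({a, b, c} : Set (ℝ × ℝ)) =
          (fun v : ℝ × ℝ => ((s, s) : ℝ × ℝ) + t • v) ''
            convexHull ℝ ({((0 : ℝ), (0 : ℝ)), ((ℓ : ℝ), (ℓ : ℝ)),
              ((k : ℝ) + 1, (k : ℝ))} : Set (ℝ × ℝ))) ∨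
      (∃ (s t : ℝ) (j : ℕ), 0 < t ∧
        convexHull ℝ ({a, b, c} : Set (ℝ × ℝ)) =
          (fun v : ℝ × ℝ => ((s, s) : ℝ × ℝ) + t • v) ''
            convexHull ℝ ({((0 : ℝ), (0 : ℝ)), ((1 : ℝ), (-1 : ℝ)),
              ((j : ℝ) + 1, -(j : ℝ))} : Set (ℝ × ℝ))) ∨
      (∃ (s t : ℝ) (j : ℕ), 0 < t ∧
        convexHull ℝ ({a, b, c} : Set (ℝ × ℝ)) =
          (fun v : ℝ × ℝ => ((s, s) : ℝ × ℝ) + t • v) ''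
            convexHull ℝ ({((0 : ℝ), (0 : ℝ)), ((1 : ℝ), (-1 : ℝ)),
              ((j : ℝ), -(j : ℝ) - 1)} : Set (ℝ × ℝ))) ∨
      (∃ (s t : ℝ), 0 < t ∧
        convexHull ℝ ({a, b, c} : Set (ℝ × ℝ)) =
          (fun v : ℝ × ℝ => ((s, s) : ℝ × ℝ) + t • v) ''
            convexHull ℝ ({((0 : ℝ), (0 : ℝ)), ((1 : ℝ), (0 : ℝ)),
              ((0 : ℝ), (-1 : ℝ))} : Set (ℝ × ℝ)))) := by
  have h : MPConds a b c ↔ IsListed (convexHull ℝ {a, b, c}) := by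
    rw [mpConds_iff_exists_isLowestCorner hind]
    constructor
    · rintro ⟨p, t, u, v, ht, hcorner, heq⟩
      exact heq ▸ hcorner.isListed ht
    · exact IsListed.exists_isLowestCorner
  simpa only [IsListed, latticeTriangle, toR, Int.cast_neg, Int.cast_add, Int.cast_sub,
    Int.cast_one, Int.cast_zero, Int.cast_natCast] using h

end Stmt1
end

section
/- Let j ∈ ℕ and let a, b, c ∈ ℝ² satisfy b − a = t₁·(j+1,−j) and c − a = t₂·(j,−j−1) for some real numbers t₁, t₂ > 0. Suppose ρ ∈ ℤ² is primitive with c − b = t₃·ρ for some real t₃ > 0, and suppose that both (ρ, (j+1,−j)) and (ρ, (j,−j−1)) are ℤ-bases of ℤ². Then ρ = (−1,−1) and j = 0. -/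
/-!
Let `D` be the determinant of the edge directions `u`, `v` at the apex of a triangle with side
lengths `t₁`, `t₂` and base `t₃ρ = t₂v - t₁u`. Pairing the base with `u` and with `v` (Cramer's
rule), and using that `ρ` has determinant `±1` with both, gives `t₃ = t₂|D| = t₁|D|`. So the
triangle is isosceles with `|D|ρ = v - u`. At the wall vertex `D = -(2j + 1)` and
`v - u = (-1, -1)`, so `|D|` divides `1`, which makes `2j + 1` a unit.
-/

namespace Stmt2

/-- The canonical inclusion of `ℤ × ℤ` into `ℝ × ℝ`. -/
def toR (p : ℤ × ℤ) : ℝ × ℝ := ((p.1 : ℝ), (p.2 : ℝ))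

/-- A vector of `ℤ²` is primitive if the gcd of its coordinates is `1`. -/
def Primitive (ρ : ℤ × ℤ) : Prop := Int.gcd ρ.1 ρ.2 = 1

/-- A pair of vectors of `ℤ²` is a `ℤ`-basis of `ℤ²` iff the determinant of the matrix with
these columns is `±1`. -/
def IsZBasis (u v : ℤ × ℤ) : Prop :=
  u.1 * v.2 - u.2 * v.1 = 1 ∨ u.1 * v.2 - u.2 * v.1 = -1

/-- The determinant of the `2 × 2` matrix with columns `u` and `v`, here for pairs instead of
`Fin 2 → R`, in order to compare lattice vectors with real ones. -/
def det {R : Type*} [CommRing R] (u v : R × R) : R := u.1 * v.2 - u.2 * v.1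

theorem mul_det_eq_of_smul_eq_add {R : Type*} [CommRing R] {r s t : R} {u v w : R × R}
    (h : r • w = s • u + t • v) : r * det w u = t * det v u := by
  have h_fst : r * w.1 = s * u.1 + t * v.1 := congrArg Prod.fst h
  have h_snd : r * w.2 = s * u.2 + t * v.2 := congrArg Prod.snd h
  simp only [det]
  linear_combination u.2 * h_fst - u.1 * h_snd

theorem abs_det_comm {R : Type*} [CommRing R] [LinearOrder R] (u v : R × R) :
    |det u v| = |det v u| := by
  rw [← abs_neg]
  congr 1
  simp only [det]
  ring

theorem isZBasis_iff_abs_det_eq_one {u v : ℤ × ℤ} : IsZBasis u v ↔ |det u v| = 1 :=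
  (abs_eq zero_le_one).symm

theorem toR_injective : Function.Injective toR :=
  Int.cast_injective.prodMap Int.cast_injective

theorem toR_sub (p q : ℤ × ℤ) : toR (p - q) = toR p - toR q := by
  ext <;> simp [toR]

theorem toR_zsmul (n : ℤ) (p : ℤ × ℤ) : toR (n • p) = (n : ℝ) • toR p := by
  ext <;> simp [toR]

theorem det_toR (u v : ℤ × ℤ) : det (toR u) (toR v) = det u v := by
  simp [det, toR]

theorem abs_eq_abs_mul_abs_det {u v ρ : ℤ × ℤ} {r s t : ℝ}
    (h : r • toR ρ = s • toR u + t • toR v) (hρu : IsZBasis ρ u) :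
    |r| = |t| * (|det u v| : ℤ) := by
  have hcramer : r * det ρ u = t * det v u := by
    simpa only [det_toR] using mul_det_eq_of_smul_eq_add h
  calc |r| = |r| * (|det ρ u| : ℤ) := by
        rw [isZBasis_iff_abs_det_eq_one.mp hρu, Int.cast_one, mul_one]
    _ = |t| * (|det v u| : ℤ) := by
        rw [Int.cast_abs, Int.cast_abs, ← abs_mul, ← abs_mul, hcramer]
    _ = |t| * (|det u v| : ℤ) := by rw [abs_det_comm]

theorem abs_det_smul_eq_sub {u v ρ : ℤ × ℤ} {t₁ t₂ t₃ : ℝ}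
    (ht₁ : 0 < t₁) (ht₂ : 0 < t₂) (ht₃ : 0 < t₃)
    (hbase : t₃ • toR ρ = t₂ • toR v - t₁ • toR u)
    (hρu : IsZBasis ρ u) (hρv : IsZBasis ρ v) :
    |det u v| • ρ = v - u := by
  have hbase' : t₃ • toR ρ = t₂ • toR v + (-t₁) • toR u := by
    rw [hbase, neg_smul, sub_eq_add_neg]
  have h₂ : t₃ = t₂ * (|det u v| : ℤ) := by
    simpa only [abs_of_pos ht₂, abs_of_pos ht₃] using
      abs_eq_abs_mul_abs_det (hbase'.trans (add_comm _ _)) hρu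
  have h₁ : t₃ = t₁ * (|det u v| : ℤ) := by
    simpa only [abs_neg, abs_of_pos ht₁, abs_of_pos ht₃, abs_det_comm v u] using
      abs_eq_abs_mul_abs_det hbase' hρv
  have hdet : ((|det u v| : ℤ) : ℝ) ≠ 0 := right_ne_zero_of_mul (h₁ ▸ ht₃.ne')
  have hisosceles : t₂ = t₁ := mul_right_cancel₀ hdet (h₂.symm.trans h₁)
  apply toR_injective
  apply smul_right_injective (ℝ × ℝ) ht₁.ne'
  calc t₁ • toR (|det u v| • ρ) = t₃ • toR ρ := by rw [toR_zsmul, smul_smul, ← h₁]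
    _ = t₁ • toR (v - u) := by rw [hbase, hisosceles, toR_sub, smul_sub]

theorem det_wall_directions (j : ℤ) : det (j + 1, -j) (j, -j - 1) = -(2 * j + 1) := by
  simp only [det]
  ring

theorem sub_wall_directions (j : ℤ) : ((j, -j - 1) - (j + 1, -j) : ℤ × ℤ) = (-1, -1) := by
  rw [Prod.mk_sub_mk, Prod.mk.injEq]
  constructor <;> ring

theorem wall_vertex_forces_j_zero_general (j : ℤ) (a b c : ℝ × ℝ) (ρ : ℤ × ℤ)
    (t₁ t₂ t₃ : ℝ) (ht₁ : 0 < t₁) (ht₂ : 0 < t₂) (ht₃ : 0 < t₃)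
    (hb : b - a = t₁ • toR (j + 1, -j))
    (hc : c - a = t₂ • toR (j, -j - 1))
    (hcb : c - b = t₃ • toR ρ)
    (h₁ : IsZBasis ρ (j + 1, -j))
    (h₂ : IsZBasis ρ (j, -j - 1)) :
    ρ = (-1, -1) ∧ (j = 0 ∨ j = -1) := by
  have hbase : t₃ • toR ρ = t₂ • toR (j, -j - 1) - t₁ • toR (j + 1, -j) := by
    rw [← hcb, ← hc, ← hb, sub_sub_sub_cancel_right]
  have hρ : |2 * j + 1| • ρ = (-1, -1) := by
    have h := abs_det_smul_eq_sub ht₁ ht₂ ht₃ hbase h₁ h₂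
    rwa [det_wall_directions, abs_neg, sub_wall_directions] at h
  have habs : |2 * j + 1| = 1 :=
    Int.eq_one_of_dvd_one (abs_nonneg _) (dvd_neg.mp ⟨ρ.1, (congrArg Prod.fst hρ).symm⟩)
  refine ⟨by simpa only [habs, one_smul] using hρ, ?_⟩
  rcases (abs_eq zero_le_one).mp habs with hj | hj <;> omega

theorem wall_vertex_forces_j_zero (j : ℕ) (a b c : ℝ × ℝ) (ρ : ℤ × ℤ)
    (t₁ t₂ t₃ : ℝ) (ht₁ : 0 < t₁) (ht₂ : 0 < t₂) (ht₃ : 0 < t₃)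
    (hb : b - a = t₁ • toR ((j : ℤ) + 1, -(j : ℤ)))
    (hc : c - a = t₂ • toR ((j : ℤ), -(j : ℤ) - 1))
    (hρ : Primitive ρ)
    (hcb : c - b = t₃ • toR ρ)
    (h₁ : IsZBasis ρ ((j : ℤ) + 1, -(j : ℤ)))
    (h₂ : IsZBasis ρ ((j : ℤ), -(j : ℤ) - 1)) :
    ρ = (-1, -1) ∧ j = 0 := by
  have h := wall_vertex_forces_j_zero_general j a b c ρ t₁ t₂ t₃ ht₁ ht₂ ht₃ hb hc hcb h₁ h₂
  exact h.imp_right fun hj => by omega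

end Stmt2
end

section
/- Let j ∈ ℕ. Then ((0,−2) − {p·(1,−1) + q·(−j,j−1) : p, q ∈ ℝ, p ≥ 0, q ≥ 0}) ∩ ((j,−j−1) − {p·(j+1,−j) + q·(j,−j+1) : p, q ∈ ℝ, p ≥ 0, q ≥ 0}) = conv{(−1,−1), (0,−2), (j,−j−1)}, where conv denotes the convex hull in ℝ². -/
/-!
The negated slice weights at the two vertices are the edge vectors of the triangle issuing from
them. The three corners are affinely independent, since the determinant of the edges at `(-1, -1)`
is `1` whatever `j` is, so barycentric coordinates are unique. In these coordinates the cone at a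
vertex is cut out by the nonnegativity of all coordinates but the one belonging to that vertex; the
cones at two distinct vertices together therefore impose the nonnegativity of all coordinates, which
describes the convex hull.
-/

open Finset

namespace Stmt7

section VertexCone

variable {𝕜 E ι : Type*} [Ring 𝕜] [PartialOrder 𝕜] [AddCommGroup E] [Module 𝕜 E] [Fintype ι]

variable (𝕜) in
/-- The cone with apex `v i` spanned by the edge vectors `v k - v i` of the family of vertices `v`:
the local cone of the polytope with these vertices at `v i`. The coefficient `t i` is left
unconstrained because it multiplies `v i - v i = 0`. -/
def vertexCone (v : ι → E) (i : ι) : Set E :=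
  {x | ∃ t : ι → 𝕜, (∀ k ≠ i, 0 ≤ t k) ∧ x = v i + ∑ k, t k • (v k - v i)}

theorem mem_vertexCone_iff_exists_affineCombination {v : ι → E} {i : ι} {x : E} :
    x ∈ vertexCone 𝕜 v i ↔ ∃ w : ι → 𝕜, (∀ k ≠ i, 0 ≤ w k) ∧ ∑ k, w k = 1 ∧
      univ.affineCombination 𝕜 v w = x := by
  classical
  have affineCombination_eq (w : ι → 𝕜) (hw : ∑ k, w k = 1) :
      univ.affineCombination 𝕜 v w = v i + ∑ k, w k • (v k - v i) := by
    rw [univ.affineCombination_eq_weightedVSubOfPoint_vadd_of_sum_eq_one w v hw (v i),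
      weightedVSubOfPoint_apply, vadd_eq_add, add_comm]
    simp only [vsub_eq_sub]
  constructor
  · rintro ⟨t, ht, rfl⟩
    -- Only the weight at `i` is free, so it is adjusted to make the total equal to `1`.
    let w : ι → 𝕜 := t + Pi.single i (1 - ∑ k, t k)
    have hwt : ∀ k ≠ i, w k = t k := fun k hk => by simp [w, hk]
    have hw : ∑ k, w k = 1 := by simp [w, sum_add_distrib]
    refine ⟨w, fun k hk => (ht k hk).trans_eq (hwt k hk).symm, hw, ?_⟩
    rw [affineCombination_eq w hw]
    congr 1
    refine sum_congr rfl fun k _ => ?_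
    obtain rfl | hk := eq_or_ne k i
    · simp only [sub_self, smul_zero]
    · rw [hwt k hk]
  · rintro ⟨w, hw_nonneg, hw, rfl⟩
    exact ⟨w, hw_nonneg, affineCombination_eq w hw⟩

theorem vertexCone_fin_three (v : Fin 3 → E) {i k l : Fin 3} (hik : i ≠ k) (hil : i ≠ l)
    (hkl : k ≠ l) :
    vertexCone 𝕜 v i =
      {x | ∃ p q : 𝕜, 0 ≤ p ∧ 0 ≤ q ∧ x = v i - p • (v i - v k) - q • (v i - v l)} := by
  have hsum (t : Fin 3 → 𝕜) :
      v i + ∑ m, t m • (v m - v i) = v i - t k • (v i - v k) - t l • (v i - v l) := by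
    have hother : ∀ m, m ≠ k ∧ m ≠ l → t m • (v m - v i) = 0 := by
      rintro m ⟨hmk, hml⟩
      obtain rfl : m = i := by lia
      rw [sub_self, smul_zero]
    rw [Fintype.sum_eq_add k l hkl hother, ← neg_sub (v i) (v k), ← neg_sub (v i) (v l)]
    simp only [smul_neg]
    abel
  ext x
  constructor
  · rintro ⟨t, ht, rfl⟩
    exact ⟨t k, t l, ht k hik.symm, ht l hil.symm, hsum t⟩
  · rintro ⟨p, q, hp, hq, rfl⟩
    let t : Fin 3 → 𝕜 := fun m => if m = k then p else q
    have ht : ∀ m ≠ i, 0 ≤ t m := fun m _ => by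
      by_cases hm : m = k <;> simp [t, hm, hp, hq]
    exact ⟨t, ht, by rw [hsum t]; simp only [t, if_true, if_neg hkl.symm]⟩

end VertexCone

theorem affineIndependent_of_det_ne_zero {R : Type*} [CommRing R] [NoZeroDivisors R]
    {a b c : R × R}
    (hdet : (b.1 - a.1) * (c.2 - a.2) - (b.2 - a.2) * (c.1 - a.1) ≠ 0) :
    AffineIndependent R ![a, b, c] := by
  rw [affineIndependent_iff_of_fintype]
  intro w hw hwv
  rw [univ.weightedVSub_eq_linear_combination hw] at hwv
  rw [Fin.sum_univ_three] at hw hwv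
  have h₁ : w 0 * a.1 + w 1 * b.1 + w 2 * c.1 = 0 := congrArg Prod.fst hwv
  have h₂ : w 0 * a.2 + w 1 * b.2 + w 2 * c.2 = 0 := congrArg Prod.snd hwv
  have hw₁ : w 1 = 0 := (mul_eq_zero_iff_right hdet).mp <| by
    linear_combination (c.2 - a.2) * (h₁ - a.1 * hw) - (c.1 - a.1) * (h₂ - a.2 * hw)
  have hw₂ : w 2 = 0 := (mul_eq_zero_iff_right hdet).mp <| by
    linear_combination (b.1 - a.1) * (h₂ - a.2 * hw) - (b.2 - a.2) * (h₁ - a.1 * hw)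
  have hw₀ : w 0 = 0 := by linear_combination hw - hw₁ - hw₂
  exact Fin.forall_fin_succ.mpr ⟨hw₀, Fin.forall_fin_two.mpr ⟨hw₁, hw₂⟩⟩

section OrderedField

variable {𝕜 E ι : Type*} [Field 𝕜] [LinearOrder 𝕜] [IsStrictOrderedRing 𝕜] [AddCommGroup E]
  [Module 𝕜 E]

theorem mem_convexHull_range_iff_exists_affineCombination [Fintype ι] {v : ι → E} {x : E} :
    x ∈ convexHull 𝕜 (Set.range v) ↔ ∃ w : ι → 𝕜, (∀ k, 0 ≤ w k) ∧ ∑ k, w k = 1 ∧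
      univ.affineCombination 𝕜 v w = x := by
  rw [convexHull_range_eq_exists_affineCombination]
  constructor
  · rintro ⟨s, w, hw_nonneg, hw, rfl⟩
    refine ⟨(s : Set ι).indicator w, Set.indicator_nonneg hw_nonneg, ?_, ?_⟩
    · rw [sum_indicator_subset w s.subset_univ, hw]
    · rw [← affineCombination_indicator_subset w v s.subset_univ]
  · rintro ⟨w, hw_nonneg, hw, rfl⟩
    exact ⟨univ, w, fun k _ => hw_nonneg k, hw, rfl⟩

theorem vertexCone_inter_vertexCone_eq_convexHull [Fintype ι] {v : ι → E}
    (hv : AffineIndependent 𝕜 v) {i l : ι} (hil : i ≠ l) :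
    vertexCone 𝕜 v i ∩ vertexCone 𝕜 v l = convexHull 𝕜 (Set.range v) := by
  ext x
  simp only [Set.mem_inter_iff, mem_vertexCone_iff_exists_affineCombination,
    mem_convexHull_range_iff_exists_affineCombination]
  constructor
  · rintro ⟨⟨w, hw_nonneg, hw, rfl⟩, w', hw'_nonneg, hw', hww'⟩
    have hweights : w' = w :=
      (affineIndependent_iff_eq_of_fintype_affineCombination_eq 𝕜 v).mp hv w' w hw' hw hww'
    subst hweights
    refine ⟨w', fun k => ?_, hw, rfl⟩
    obtain rfl | hk := eq_or_ne k i
    · exact hw'_nonneg k hil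
    · exact hw_nonneg k hk
  · rintro ⟨w, hw_nonneg, hw, hx⟩
    exact ⟨⟨w, fun k _ => hw_nonneg k, hw, hx⟩, w, fun k _ => hw_nonneg k, hw, hx⟩

theorem triangle_cones_inter_eq_convexHull {a b c : E} (h : AffineIndependent 𝕜 ![a, b, c]) :
    {x | ∃ p q : 𝕜, 0 ≤ p ∧ 0 ≤ q ∧ x = b - p • (b - a) - q • (b - c)} ∩
      {x | ∃ p q : 𝕜, 0 ≤ p ∧ 0 ≤ q ∧ x = c - p • (c - a) - q • (c - b)} =
      convexHull 𝕜 {a, b, c} := by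
  have hrange : Set.range ![a, b, c] = {a, b, c} := by
    simp only [Matrix.range_cons, Matrix.range_empty, Set.union_empty, Set.singleton_union]
  have hb := vertexCone_fin_three (𝕜 := 𝕜) ![a, b, c] (i := 1) (k := 0) (l := 2)
    (by decide) (by decide) (by decide)
  have hc := vertexCone_fin_three (𝕜 := 𝕜) ![a, b, c] (i := 2) (k := 0) (l := 1)
    (by decide) (by decide) (by decide)
  have hinter := vertexCone_inter_vertexCone_eq_convexHull h (i := 1) (l := 2) (by decide)
  rwa [hb, hc, hrange] at hinter

theorem cones_inter_eq_triangle_general (j : 𝕜) :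
    {w : 𝕜 × 𝕜 | ∃ p q : 𝕜, 0 ≤ p ∧ 0 ≤ q ∧
        w = ((0, -2) : 𝕜 × 𝕜) - p • ((1, -1) : 𝕜 × 𝕜) - q • ((-j, j - 1) : 𝕜 × 𝕜)} ∩
      {w : 𝕜 × 𝕜 | ∃ p q : 𝕜, 0 ≤ p ∧ 0 ≤ q ∧
        w = ((j, -j - 1) : 𝕜 × 𝕜) - p • ((j + 1, -j) : 𝕜 × 𝕜) - q • ((j, -j + 1) : 𝕜 × 𝕜)} =
      convexHull 𝕜 ({(-1, -1), (0, -2), (j, -j - 1)} : Set (𝕜 × 𝕜)) := by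
  have hα : ((1, -1) : 𝕜 × 𝕜) = (0, -2) - (-1, -1) := by rw [Prod.mk_sub_mk]; ring_nf
  have hedge : ((-j, j - 1) : 𝕜 × 𝕜) = (0, -2) - (j, -j - 1) := by rw [Prod.mk_sub_mk]; ring_nf
  have hα' : ((j + 1, -j) : 𝕜 × 𝕜) = (j, -j - 1) - (-1, -1) := by rw [Prod.mk_sub_mk]; ring_nf
  have hedge' : ((j, -j + 1) : 𝕜 × 𝕜) = (j, -j - 1) - (0, -2) := by rw [Prod.mk_sub_mk]; ring_nf
  have hindep : AffineIndependent 𝕜 ![((-1, -1) : 𝕜 × 𝕜), (0, -2), (j, -j - 1)] :=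
    affineIndependent_of_det_ne_zero (by ring_nf; exact one_ne_zero)
  rw [hα, hedge, hα', hedge']
  exact triangle_cones_inter_eq_convexHull hindep

end OrderedField

theorem cones_inter_eq_triangle (j : ℕ) :
    {w : ℝ × ℝ | ∃ p q : ℝ, 0 ≤ p ∧ 0 ≤ q ∧
        w = (((0 : ℝ), (-2 : ℝ)) : ℝ × ℝ)
              - p • (((1 : ℝ), (-1 : ℝ)) : ℝ × ℝ)
              - q • ((-(j : ℝ), (j : ℝ) - 1) : ℝ × ℝ)} ∩
      {w : ℝ × ℝ | ∃ p q : ℝ, 0 ≤ p ∧ 0 ≤ q ∧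
        w = (((j : ℝ), -(j : ℝ) - 1) : ℝ × ℝ)
              - p • (((j : ℝ) + 1, -(j : ℝ)) : ℝ × ℝ)
              - q • (((j : ℝ), -(j : ℝ) + 1) : ℝ × ℝ)} =
      convexHull ℝ ({((-1 : ℝ), (-1 : ℝ)), ((0 : ℝ), (-2 : ℝ)),
        ((j : ℝ), -(j : ℝ) - 1)} : Set (ℝ × ℝ)) :=
  cones_inter_eq_triangle_general (j : ℝ)

end Stmt7
end

section
/- Let R = ℤ[x,y] be the polynomial ring over ℤ in two variables, A = R/(x², y³) and B = R/(x², y³ + x·y²), and write x̄ and ȳ for the images of x and y in the respective quotient. There is no ring isomorphism φ : A → B such that the ℤ-submodule of B generated by {φ(x̄), φ(ȳ)} equals the ℤ-submodule of B generated by {x̄, ȳ}. -/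
namespace Stmt11

open MvPolynomial

/-- `ℤ[x,y]`. -/
abbrev R : Type := MvPolynomial (Fin 2) ℤ

/-- The ideal `(x², y³)` of `ℤ[x,y]`. -/
noncomputable def IA : Ideal R := Ideal.span {(X 0 : R) ^ 2, (X 1 : R) ^ 3}

/-- The ideal `(x², y³ + x·y²)` of `ℤ[x,y]`. -/
noncomputable def IB : Ideal R := Ideal.span {(X 0 : R) ^ 2, (X 1 : R) ^ 3 + X 0 * (X 1 : R) ^ 2}

/-- `A = ℤ[x,y]/(x², y³)`. -/
abbrev A : Type := R ⧸ IA

/-- `B = ℤ[x,y]/(x², y³ + x·y²)`. -/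
abbrev B : Type := R ⧸ IB

noncomputable def xA : A := Ideal.Quotient.mk IA (X 0)
noncomputable def yA : A := Ideal.Quotient.mk IA (X 1)
noncomputable def xB : B := Ideal.Quotient.mk IB (X 0)
noncomputable def yB : B := Ideal.Quotient.mk IB (X 1)

/-!
The rings are told apart by their nilpotent elements modulo `3`. Cubing is additive modulo `3`, and
every nilpotent element of `A` lies in the ideal `(x̄, ȳ)`, both of whose generators have cube
zero; so every nilpotent element of `A` has a cube divisible by `3`. In `B`, however, `ȳ` is
nilpotent but its cube is not divisible by `3`, because the coefficients of `y³` and `xy²` agree in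
every element of the ideal `(x², y³ + x·y²)`. Hence `A` and `B` are not isomorphic even when the
grading is ignored.
-/

theorem natCast_dvd_pow_of_mem_span {S : Type*} [CommSemiring S] {p : ℕ} (hp : p.Prime)
    {s : Set S} (hs : ∀ u ∈ s, (p : S) ∣ u ^ p) {w : S} (hw : w ∈ Ideal.span s) :
    (p : S) ∣ w ^ p := by
  induction hw using Submodule.span_induction with
  | mem u hu => exact hs u hu
  | zero => simp [hp.ne_zero]
  | add u v _ _ hu hv =>
    obtain ⟨r, hr⟩ := exists_add_pow_prime_eq hp u v
    rw [hr, mul_assoc, mul_assoc]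
    exact (hu.add hv).add (dvd_mul_right _ _)
  | smul a u _ hu =>
    rw [smul_eq_mul, mul_pow]
    exact hu.mul_left _

theorem idealOfVars_eq_ker_constantCoeff (σ k : Type*) [CommSemiring k] :
    idealOfVars σ k = RingHom.ker (constantCoeff : MvPolynomial σ k →+* k) := by
  ext f
  simpa [Nat.lt_one_iff, Finsupp.degree_eq_zero_iff, RingHom.mem_ker, constantCoeff_eq]
    using mem_pow_idealOfVars_iff' 1 f

theorem isRadical_idealOfVars (σ k : Type*) [CommSemiring k] [IsReduced k] :
    (idealOfVars σ k).IsRadical := by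
  rw [idealOfVars_eq_ker_constantCoeff]
  have hsurj : Function.Surjective (constantCoeff : MvPolynomial σ k →+* k) :=
    fun r => ⟨C r, constantCoeff_C σ r⟩
  exact (RingHom.ker_isRadical_iff_reduced_of_surjective hsurj).mpr inferInstance

theorem xA_sq : xA ^ 2 = 0 :=
  Ideal.Quotient.eq_zero_iff_mem.mpr (Ideal.subset_span (by simp))

theorem yA_cube : yA ^ 3 = 0 :=
  Ideal.Quotient.eq_zero_iff_mem.mpr (Ideal.subset_span (by simp))

theorem xB_sq : xB ^ 2 = 0 :=
  Ideal.Quotient.eq_zero_iff_mem.mpr (Ideal.subset_span (by simp))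

theorem yB_cube_add : yB ^ 3 + xB * yB ^ 2 = 0 :=
  Ideal.Quotient.eq_zero_iff_mem.mpr (Ideal.subset_span (by simp))

theorem IA_le_idealOfVars : IA ≤ idealOfVars (Fin 2) ℤ := by
  have hX (i : Fin 2) : (X i : R) ∈ idealOfVars (Fin 2) ℤ := Ideal.subset_span ⟨i, rfl⟩
  rw [IA, Ideal.span_le, Set.pair_subset_iff]
  exact ⟨Ideal.pow_mem_of_mem _ (hX 0) 2 two_pos, Ideal.pow_mem_of_mem _ (hX 1) 3 three_pos⟩

theorem map_mk_idealOfVars :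
    (idealOfVars (Fin 2) ℤ).map (Ideal.Quotient.mk IA) = Ideal.span {xA, yA} := by
  have hrange : Set.range (X : Fin 2 → R) = {X 0, X 1} := by
    ext; simp [Fin.exists_fin_two, eq_comm]
  rw [idealOfVars, Ideal.map_span, hrange, Set.image_pair, xA, yA]

theorem nilradical_A_le_span : nilradical A ≤ Ideal.span {xA, yA} := by
  intro a ha
  obtain ⟨f, rfl⟩ := Ideal.Quotient.mk_surjective a
  obtain ⟨n, hn⟩ := ha
  have hf : f ^ n ∈ idealOfVars (Fin 2) ℤ :=
    IA_le_idealOfVars (Ideal.Quotient.eq_zero_iff_mem.mp hn)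
  rw [← map_mk_idealOfVars]
  exact Ideal.mem_map_of_mem _ (isRadical_idealOfVars _ _ ⟨n, hf⟩)

theorem three_dvd_cube_of_isNilpotent {a : A} (ha : IsNilpotent a) : 3 ∣ a ^ 3 := by
  have hgen : ∀ u ∈ ({xA, yA} : Set A), ((3 : ℕ) : A) ∣ u ^ 3 := by
    rintro u (rfl | rfl)
    · simp [pow_succ xA 2, xA_sq]
    · simp [yA_cube]
  exact_mod_cast natCast_dvd_pow_of_mem_span Nat.prime_three hgen (nilradical_A_le_span ha)

theorem isNilpotent_yB : IsNilpotent yB :=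
  ⟨4, by linear_combination (yB - xB) * yB_cube_add + yB ^ 2 * xB_sq⟩

theorem coeff_eq_coeff_of_mem_IB {f : R} (hf : f ∈ IB) :
    coeff (Finsupp.single 1 3) f = coeff (Finsupp.single 0 1 + Finsupp.single 1 2) f := by
  obtain ⟨g, h, rfl⟩ := Ideal.mem_span_pair.mp hf
  have hxy : (X 0 : R) * X 1 ^ 2 = monomial (Finsupp.single 0 1 + Finsupp.single 1 2) 1 := by
    simp [X, monomial_pow, monomial_mul]
  rw [hxy]
  simp only [X_pow_eq_monomial, mul_add, coeff_add, coeff_mul_monomial']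
  simp [Finsupp.le_def, Fin.forall_fin_two]

theorem not_three_dvd_yB_cube : ¬ 3 ∣ yB ^ 3 := by
  rintro ⟨b, hb⟩
  obtain ⟨g, rfl⟩ := Ideal.Quotient.mk_surjective b
  have hmem : (X 1 : R) ^ 3 - 3 * g ∈ IB :=
    Ideal.Quotient.eq.mp (by simpa only [map_mul, map_pow, map_ofNat, yB] using hb)
  have hcoeff := coeff_eq_coeff_of_mem_IB hmem
  have h3 (m : Fin 2 →₀ ℕ) : coeff m (3 * g) = 3 * coeff m g := coeff_C_mul m 3 g
  have hne : Finsupp.single 1 3 ≠ (Finsupp.single 0 1 + Finsupp.single 1 2 : Fin 2 →₀ ℕ) :=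
    fun h => by simpa using DFunLike.congr_fun h 0
  simp only [coeff_sub, h3, coeff_X_pow, if_true, if_neg hne] at hcoeff
  omega

theorem no_ring_iso_preserving_degree_two_general : IsEmpty (A ≃+* B) := by
  refine ⟨fun φ => not_three_dvd_yB_cube ?_⟩
  have h : 3 ∣ φ.symm yB ^ 3 := three_dvd_cube_of_isNilpotent (isNilpotent_yB.map φ.symm)
  simpa only [map_pow, map_ofNat φ 3, RingEquiv.apply_symm_apply] using map_dvd φ h

theorem no_ring_iso_preserving_degree_two :
    ¬ ∃ φ : A ≃+* B,
        Submodule.span ℤ ({φ xA, φ yA} : Set B) = Submodule.span ℤ ({xB, yB} : Set B) :=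
  fun ⟨φ, _⟩ => no_ring_iso_preserving_degree_two_general.false φ

end Stmt11
end

section
/- Let R = ℤ[x,y] be the polynomial ring over ℤ in two variables and B = R/(x², y³ + x·y²), and write x̄ and ȳ for the images of x and y in B. Then for every a ∈ ℤ and every d ∈ {1,−1}, the element (a·x̄ + d·ȳ)³ of B is nonzero. -/
namespace Stmt12

open MvPolynomial

/-- `ℤ[x,y]`. -/
abbrev R : Type := MvPolynomial (Fin 2) ℤ

/-- The ideal `(x², y³ + x·y²)` of `ℤ[x,y]`. -/
noncomputable def IB : Ideal R := Ideal.span {(X 0 : R) ^ 2, (X 1 : R) ^ 3 + X 0 * (X 1 : R) ^ 2}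

/-- `B = ℤ[x,y]/(x², y³ + x·y²)`. -/
abbrev B : Type := R ⧸ IB

noncomputable def xB : B := Ideal.Quotient.mk IB (X 0)
noncomputable def yB : B := Ideal.Quotient.mk IB (X 1)

/-!
Since `x̄² = 0` and `ȳ³ = -x̄ȳ²`, the cube of `a·x̄ + d·ȳ` is `(3ad² - d³)·x̄ȳ²`. Viewed over
the dual numbers `ℤ[ε]` with `ε = x̄`, the ring `B` is obtained by adjoining a root `ȳ` of the
monic cubic `Y³ + ε·Y²`. Hence `1, ȳ, ȳ²` are independent over `ℤ[ε]`, so `x̄ȳ² = ε·ȳ²` is not a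
torsion element, and the cube vanishes exactly when `d²(3a - d) = 0`.
-/

lemma smul_add_smul_cube {S A : Type*} [CommRing S] [CommRing A] [Algebra S A] {x y : A}
    (hx : x ^ 2 = 0) (hy : y ^ 3 + x * y ^ 2 = 0) (a d : S) :
    (a • x + d • y) ^ 3 = (3 * a * d ^ 2 - d ^ 3) • (x * y ^ 2) := by
  simp only [Algebra.smul_def, map_sub, map_mul, map_pow, map_ofNat]
  set α := algebraMap S A a
  set δ := algebraMap S A d
  linear_combination (α ^ 3 * x + 3 * α ^ 2 * δ * y) * hx + δ ^ 3 * hy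

lemma of_mul_root_pow_eq_zero_iff {S : Type*} [CommRing S] {f : Polynomial S} (hf : f.Monic)
    {k : ℕ} (hk : k < f.natDegree) {s : S} :
    AdjoinRoot.of f s * AdjoinRoot.root f ^ k = 0 ↔ s = 0 := by
  refine ⟨fun h ↦ ?_, fun h ↦ by rw [h, map_zero, zero_mul]⟩
  by_contra hs
  have hdeg : (Polynomial.C s * Polynomial.X ^ k).natDegree < f.natDegree :=
    (Polynomial.natDegree_C_mul_X_pow_le s k).trans_lt hk
  have hne : Polynomial.C s * Polynomial.X ^ k ≠ 0 := by
    rwa [Ne, Polynomial.C_mul_X_pow_eq_monomial, Polynomial.monomial_eq_zero_iff]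
  refine AdjoinRoot.mk_ne_zero_of_natDegree_lt hf hne hdeg ?_
  rwa [map_mul, map_pow, AdjoinRoot.mk_C, AdjoinRoot.mk_X]

lemma xB_sq : xB ^ 2 = 0 := by
  rw [xB, ← map_pow, Ideal.Quotient.eq_zero_iff_mem]
  exact Ideal.subset_span (Set.mem_insert _ _)

lemma yB_cube_add : yB ^ 3 + xB * yB ^ 2 = 0 := by
  simp only [xB, yB, ← map_pow, ← map_mul, ← map_add, Ideal.Quotient.eq_zero_iff_mem]
  exact Ideal.subset_span (Set.mem_insert_of_mem _ rfl)

/-- The cubic `Y³ + ε·Y²` over `ℤ[ε]`: the second relation of `B`, read as the equation of `ȳ` over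
the subring generated by `x̄ = ε`. -/
noncomputable def dualCubic : Polynomial (DualNumber ℤ) :=
  Polynomial.X ^ 3 + Polynomial.C DualNumber.eps * Polynomial.X ^ 2

lemma natDegree_dualCubic : dualCubic.natDegree = 3 := by
  unfold dualCubic
  compute_degree!

lemma monic_dualCubic : dualCubic.Monic := by
  unfold dualCubic
  monicity!

lemma of_eps_sq {S : Type*} [CommRing S] (f : Polynomial (DualNumber S)) :
    AdjoinRoot.of f DualNumber.eps ^ 2 = 0 := by
  rw [← map_pow, DualNumber.eps_pow_two, map_zero]

lemma root_dualCubic_relation :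
    AdjoinRoot.root dualCubic ^ 3 +
      AdjoinRoot.of dualCubic DualNumber.eps * AdjoinRoot.root dualCubic ^ 2 = 0 := by
  have hroot : Polynomial.eval₂ (AdjoinRoot.of dualCubic) (AdjoinRoot.root dualCubic)
      (Polynomial.X ^ 3 + Polynomial.C DualNumber.eps * Polynomial.X ^ 2) = 0 :=
    AdjoinRoot.eval₂_root dualCubic
  simpa only [Polynomial.eval₂_add, Polynomial.eval₂_mul, Polynomial.eval₂_X_pow,
    Polynomial.eval₂_C] using hroot

/-- The comparison map `B → ℤ[ε][Y]/(Y³ + ε·Y²)` sending `x̄` to `ε` and `ȳ` to the class of `Y`,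
through which nonvanishing in `B` is detected. -/
noncomputable def toAdjoinRoot : B →+* AdjoinRoot dualCubic :=
  Ideal.Quotient.lift IB
    (aeval ![AdjoinRoot.of dualCubic DualNumber.eps, AdjoinRoot.root dualCubic] :
      R →ₐ[ℤ] AdjoinRoot dualCubic).toRingHom <| by
    suffices IB ≤ RingHom.ker _ from fun p hp ↦ this hp
    rw [IB, Ideal.span_le, Set.pair_subset_iff]
    constructor
    · simpa using of_eps_sq dualCubic
    · simpa using root_dualCubic_relation

lemma toAdjoinRoot_xB : toAdjoinRoot xB = AdjoinRoot.of dualCubic DualNumber.eps := by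
  simp [toAdjoinRoot, xB]

lemma toAdjoinRoot_yB : toAdjoinRoot yB = AdjoinRoot.root dualCubic := by
  simp [toAdjoinRoot, yB]

lemma zsmul_xB_mul_yB_sq_eq_zero_iff {n : ℤ} : n • (xB * yB ^ 2) = 0 ↔ n = 0 := by
  refine ⟨fun h ↦ ?_, fun h ↦ by rw [h, zero_smul]⟩
  have himage :
      AdjoinRoot.of dualCubic (n • DualNumber.eps) * AdjoinRoot.root dualCubic ^ 2 = 0 := by
    simpa only [map_zsmul, map_mul, map_pow, toAdjoinRoot_xB, toAdjoinRoot_yB, map_zero,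
      smul_mul_assoc] using congrArg toAdjoinRoot h
  have heps : n • (DualNumber.eps : DualNumber ℤ) = 0 :=
    (of_mul_root_pow_eq_zero_iff monic_dualCubic (by rw [natDegree_dualCubic]; norm_num)).mp himage
  simpa using congrArg TrivSqZeroExt.snd heps

theorem cube_ne_zero_general (a d : ℤ) :
    (a • xB + d • yB) ^ 3 ≠ 0 ↔ d ≠ 0 ∧ d ≠ 3 * a := by
  have hfactor : 3 * a * d ^ 2 - d ^ 3 = d ^ 2 * (3 * a - d) := by ring
  rw [smul_add_smul_cube xB_sq yB_cube_add, Ne, zsmul_xB_mul_yB_sq_eq_zero_iff, hfactor,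
    mul_eq_zero, pow_eq_zero_iff two_ne_zero, sub_eq_zero, not_or, eq_comm (a := 3 * a)]

theorem cube_ne_zero (a d : ℤ) (hd : d = 1 ∨ d = -1) :
    (a • xB + d • yB) ^ 3 ≠ 0 :=
  (cube_ne_zero_general a d).mpr (by omega)

end Stmt12
end

section
/- Let R = ℤ[x,y] be the polynomial ring over ℤ in two variables and B = R/(x², y³ + x·y²), and write x̄ and ȳ for the images of x and y in B. If a, b ∈ ℤ satisfy (a·x̄ + b·ȳ)² = 0 in B, then b = 0. -/
namespace Stmt13

open MvPolynomial

/-- `ℤ[x,y]`. -/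
abbrev R : Type := MvPolynomial (Fin 2) ℤ

/-- The ideal `(x², y³ + x·y²)` of `ℤ[x,y]`. -/
noncomputable def IB : Ideal R := Ideal.span {(X 0 : R) ^ 2, (X 1 : R) ^ 3 + X 0 * (X 1 : R) ^ 2}

/-- `B = ℤ[x,y]/(x², y³ + x·y²)`. -/
abbrev B : Type := R ⧸ IB

noncomputable def xB : B := Ideal.Quotient.mk IB (X 0)
noncomputable def yB : B := Ideal.Quotient.mk IB (X 1)

/-!
On the axis `x = 0` both generators of the ideal become multiples of `y³`, while `(a·x + b·y)²`
becomes `b²·y²`; comparing coefficients of `y²` gives `b² = 0`.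
-/

section AxisRestriction

variable {σ k : Type*} [DecidableEq σ] [CommSemiring k]

/-- Restriction of a polynomial function to the `j`-th coordinate axis: the variable `X j` becomes
the variable of `k[X]`, and every other variable is set to `0`. -/
noncomputable def axisRestriction (j : σ) : MvPolynomial σ k →ₐ[k] Polynomial k :=
  aeval (Pi.single j Polynomial.X)

@[simp]
theorem axisRestriction_X_self (j : σ) :
    axisRestriction j (X j : MvPolynomial σ k) = Polynomial.X := by
  simp [axisRestriction]

theorem axisRestriction_X_of_ne {i j : σ} (hij : i ≠ j) :
    axisRestriction j (X i : MvPolynomial σ k) = 0 := by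
  simp [axisRestriction, hij]

theorem X_pow_dvd_axisRestriction_of_mem_span {i j : σ} (hij : i ≠ j) {n : ℕ}
    {p : MvPolynomial σ k} (hp : p ∈ Ideal.span {X i, X j ^ n}) :
    Polynomial.X ^ n ∣ axisRestriction j p := by
  obtain ⟨q, r, rfl⟩ := Ideal.mem_span_pair.mp hp
  simp [axisRestriction_X_of_ne hij]

theorem axisRestriction_smul_X_add_smul_X_pow {i j : σ} (hij : i ≠ j) (a b : k) (n : ℕ) :
    axisRestriction j ((a • X i + b • X j) ^ n) = Polynomial.monomial n (b ^ n) := by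
  simp [axisRestriction_X_of_ne hij, smul_pow, Polynomial.smul_X_eq_monomial]

end AxisRestriction

theorem span_sq_cube_add_mul_sq_le_span_cube {A : Type*} [CommSemiring A] (x y : A) :
    Ideal.span {x ^ 2, y ^ 3 + x * y ^ 2} ≤ Ideal.span {x, y ^ 3} := by
  have hx : x ∈ Ideal.span {x, y ^ 3} := Ideal.subset_span (Set.mem_insert _ _)
  have hy : y ^ 3 ∈ Ideal.span {x, y ^ 3} := Ideal.subset_span (Set.mem_insert_of_mem _ rfl)
  rw [Ideal.span_le, Set.pair_subset_iff]
  exact ⟨Ideal.pow_mem_of_mem _ hx 2 two_pos, add_mem hy (Ideal.mul_mem_right _ _ hx)⟩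

theorem sq_eq_zero_forces_b_zero_general {σ k : Type*} [CommRing k] [IsReduced k] {i j : σ}
    (hij : i ≠ j) {m n : ℕ} (hmn : m < n) {I : Ideal (MvPolynomial σ k)}
    (hI : I ≤ Ideal.span {X i, X j ^ n}) {a b : k}
    (h : (a • Ideal.Quotient.mk I (X i) + b • Ideal.Quotient.mk I (X j)) ^ m = 0) : b = 0 := by
  classical
  have hmem : (a • X i + b • X j) ^ m ∈ I := Ideal.Quotient.eq_zero_iff_mem.mp h
  have hdvd := X_pow_dvd_axisRestriction_of_mem_span hij (hI hmem)
  rw [axisRestriction_smul_X_add_smul_X_pow hij] at hdvd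
  have hb : b ^ m = 0 := by
    simpa only [Polynomial.coeff_monomial_same] using Polynomial.X_pow_dvd_iff.mp hdvd m hmn
  exact IsNilpotent.eq_zero ⟨m, hb⟩

theorem sq_eq_zero_forces_b_zero (a b : ℤ) (h : (a • xB + b • yB) ^ 2 = 0) : b = 0 :=
  sq_eq_zero_forces_b_zero_general zero_ne_one (Nat.lt_succ_self 2)
    (span_sq_cube_add_mul_sq_le_span_cube _ _) h

end Stmt13
end
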